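/- Let k : ℕ → ℕ be any sequence with 1 < k(n) < n for all n ≥ 4, and set X_n := {θ ∈ ℝ/ℤ : (−2)^{n−1}·θ = (−2)^{k(n)−1}·θ and (−2)^{n−k(n)}·θ ≠ θ}. Then each X_n is a nonempty finite set and the uniform probability measures ν_n := (1/Card(X_n)) · Σ_{θ ∈ X_n} δ_θ converge weakly to the Haar probability measure λ on ℝ/ℤ as n → ∞. -/

import Mathlib

open MeasureTheory Filter Topology
open scoped ENNReal

/-- The uniform probability measure on a (nonempty finite) subset `S` of a measurable
space: `(1/Card S) · Σ_{x ∈ S} δ_x`. -/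
noncomputable def uniformOn {X : Type*} [MeasurableSpace X] (S : Set X) : Measure X :=
  (Nat.card S : ℝ≥0∞)⁻¹ • Measure.sum (fun x : S => Measure.dirac (x : X))

/-- Weak convergence of a sequence of measures: convergence of integrals of every
bounded continuous real-valued function. -/
def WeakTendsto {X : Type*} [TopologicalSpace X] [MeasurableSpace X]
    (μ : ℕ → Measure X) (ν : Measure X) : Prop :=
  ∀ g : BoundedContinuousFunction X ℝ,
    Tendsto (fun n => ∫ x, g x ∂(μ n)) atTop (𝓝 (∫ x, g x ∂ν))

theorem integral_uniformOn_coe_finset {X E : Type*} [MeasurableSpace X]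
    [MeasurableSingletonClass X] [NormedAddCommGroup E] [NormedSpace ℝ E] [CompleteSpace E]
    (S : Finset X) (g : X → E) :
    ∫ x, g x ∂(uniformOn (S : Set X)) = (S.card : ℝ)⁻¹ • ∑ x ∈ S, g x := by
  have hint : ∀ x : (S : Set X), Integrable g (Measure.dirac (x : X)) := fun x =>
    integrable_dirac (by simp)
  rw [uniformOn, integral_smul_measure, Measure.sum_fintype,
    integral_finsetSum_measure fun x _ => hint x]
  simp only [integral_dirac]
  rw [← Finset.sum_coe_sort S g]
  simp

theorem isProbabilityMeasure_uniformOn_coe_finset {X : Type*} [MeasurableSpace X]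
    {S : Finset X} (hS : S.Nonempty) : IsProbabilityMeasure (uniformOn (S : Set X)) := by
  constructor
  have h : (S.card : ℝ≥0∞) ≠ 0 := by simpa using hS.ne_empty
  simp [uniformOn, Measure.sum_fintype, ENNReal.inv_mul_cancel h]

theorem integral_fourier_eq_zero {m : ℤ} (hm : m ≠ 0) :
    ∫ x : UnitAddCircle, fourier m x = 0 :=
  integral_eq_zero_of_add_right_eq_neg (μ := volume)
    (fourier_add_half_inv_index hm one_pos)

/-- **Weyl's criterion** for weak convergence to the Haar measure of the circle. -/
theorem weakTendsto_volume_of_tendsto_integral_fourier {μ : ℕ → Measure UnitAddCircle}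
    (hμ : ∀ᶠ n in atTop, IsProbabilityMeasure (μ n))
    (h : ∀ m : ℤ, m ≠ 0 → Tendsto (fun n => ∫ x, fourier m x ∂(μ n)) atTop (𝓝 0)) :
    WeakTendsto μ volume := by
  have : IsProbabilityMeasure (volume : Measure UnitAddCircle) :=
    ⟨UnitAddCircle.measure_univ⟩
  have hint (ν : Measure UnitAddCircle) [IsProbabilityMeasure ν] (f : C(UnitAddCircle, ℂ)) :
      Integrable f ν := f.continuous.integrable_of_hasCompactSupport
        (HasCompactSupport.of_compactSpace _)
  have hspan : ∀ f ∈ Submodule.span ℂ (Set.range (@fourier 1)),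
      Tendsto (fun n => ∫ x, f x ∂(μ n)) atTop (𝓝 (∫ x, f x)) := by
    intro f hf
    induction hf using Submodule.span_induction with
    | mem f hf =>
      obtain ⟨m, rfl⟩ := hf
      rcases eq_or_ne m 0 with rfl | hm
      · refine tendsto_const_nhds.congr' ?_
        filter_upwards [hμ] with n hn
        simp
      · rw [integral_fourier_eq_zero hm]
        exact h m hm
    | zero => simp
    | add f g _ _ hf hg =>
      have := hf.add hg
      rw [← integral_add (hint _ f) (hint _ g)] at this
      refine this.congr' ?_
      filter_upwards [hμ] with n hn
      rw [← integral_add (hint _ f) (hint _ g)]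
      rfl
    | smul c f _ hf =>
      simpa [integral_const_mul] using hf.const_mul c
  have hdense : ∀ f : C(UnitAddCircle, ℂ),
      Tendsto (fun n => ∫ x, f x ∂(μ n)) atTop (𝓝 (∫ x, f x)) := by
    intro f
    have hclose (ν : Measure UnitAddCircle) [IsProbabilityMeasure ν] (g : C(UnitAddCircle, ℂ)) :
        dist (∫ x, f x ∂ν) (∫ x, g x ∂ν) ≤ dist f g := by
      rw [dist_eq_norm, ← integral_sub (hint _ f) (hint _ g), dist_eq_norm]
      simpa using norm_integral_le_of_norm_le_const (μ := ν)
        (Eventually.of_forall fun x => (f - g).norm_coe_le_norm x)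
    rw [Metric.tendsto_nhds]
    intro ε hε
    have hf : f ∈ (Submodule.span ℂ (Set.range (@fourier 1))).topologicalClosure := by
      rw [span_fourier_closure_eq_top]; trivial
    obtain ⟨g, hg, hfg⟩ := Metric.mem_closure_iff.1 hf (ε / 3) (by positivity)
    filter_upwards [hμ, Metric.tendsto_nhds.1 (hspan g hg) (ε / 3) (by positivity)]
      with n hn hgn
    have h₁ := hclose (μ n) g
    have h₂ := hclose volume g
    rw [dist_comm] at h₂
    linarith [dist_triangle4 (∫ x, f x ∂(μ n)) (∫ x, g x ∂(μ n)) (∫ x, g x) (∫ x, f x)]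
  intro g
  have := hdense ⟨fun x => (g x : ℂ), by fun_prop⟩
  simp only [ContinuousMap.coe_mk, integral_complex_ofReal] at this
  simpa [Function.comp_def] using (Complex.continuous_re.tendsto _).comp this

theorem card_eq_natAbs_of_mem_iff_zsmul_eq_zero {N : ℤ} (hN : N ≠ 0)
    {A : Finset UnitAddCircle} (hA : ∀ θ, θ ∈ A ↔ N • θ = 0) : A.card = N.natAbs := by
  have : NeZero N.natAbs := ⟨Int.natAbs_ne_zero.2 hN⟩
  have hset : (A : Set UnitAddCircle) = {θ | N • θ = 0} := by ext; simp [hA]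
  refine le_antisymm ?_ ?_
  · have := AddCircle.card_torsion_le_of_isSMulRegular_int (𝕜 := ℝ) 1 N hN
      (.of_right_eq_zero_of_smul fun x hx => by simpa [hN] using hx)
    rw [← hset] at this
    simpa using this
  · calc N.natAbs = (Finset.univ.image (ZMod.toAddCircle (N := N.natAbs))).card := by
          rw [Finset.card_image_of_injective _ (ZMod.toAddCircle_injective _)]; simp
      _ ≤ A.card := Finset.card_le_card fun θ hθ => by
          obtain ⟨j, -, rfl⟩ := Finset.mem_image.1 hθ
          rw [hA, ← map_zsmul, zsmul_eq_mul,
            (ZMod.intCast_zmod_eq_zero_iff_dvd N N.natAbs).2 (by simp)]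
          simp

theorem norm_sum_fourier_le_of_mem_iff_zsmul_eq_zero {N : ℤ} (hN : N ≠ 0)
    {A : Finset UnitAddCircle} (hA : ∀ θ, θ ∈ A ↔ N • θ = 0) {m : ℤ} (hm : m ≠ 0) :
    ‖∑ θ ∈ A, fourier m θ‖ ≤ |(m : ℝ)| := by
  by_cases hdvd : N ∣ m
  · calc ‖∑ θ ∈ A, fourier m θ‖ ≤ ∑ θ ∈ A, ‖fourier m θ‖ := norm_sum_le _ _
      _ = (N.natAbs : ℝ) := by
        simp [fourier_apply, Circle.norm_coe, card_eq_natAbs_of_mem_iff_zsmul_eq_zero hN hA]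
      _ ≤ (m.natAbs : ℝ) := by
        exact_mod_cast Nat.le_of_dvd (Int.natAbs_pos.2 hm) (Int.natAbs_dvd_natAbs.2 hdvd)
      _ = |(m : ℝ)| := by simp [Nat.cast_natAbs]
  · have : NeZero N.natAbs := ⟨Int.natAbs_ne_zero.2 hN⟩
    set a : UnitAddCircle := ZMod.toAddCircle (1 : ZMod N.natAbs) with ha_def
    have ha : N • a = 0 := by
      rw [ha_def, ← map_zsmul, zsmul_eq_mul,
        (ZMod.intCast_zmod_eq_zero_iff_dvd N N.natAbs).2 (by simp)]
      simp
    have hma : fourier m a ≠ 1 := by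
      intro h1
      have h2 : AddCircle.toCircle (m • a) = AddCircle.toCircle (0 : UnitAddCircle) := by
        rw [AddCircle.toCircle_zero]; exact Subtype.ext h1
      have h3 := AddCircle.injective_toCircle one_ne_zero h2
      rw [ha_def, ← map_zsmul, ZMod.toAddCircle_eq_zero, zsmul_eq_mul, mul_one,
        ZMod.intCast_zmod_eq_zero_iff_dvd] at h3
      exact hdvd (by simpa using h3)
    have hshift : ∑ θ ∈ A, fourier m θ = fourier m a * ∑ θ ∈ A, fourier m θ := by
      rw [Finset.mul_sum]
      refine (Finset.sum_nbij' (fun θ => a + θ) (fun θ => -a + θ) ?_ ?_ ?_ ?_ ?_).symm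
      · intro θ hθ; rw [hA] at *; simp [smul_add, ha, hθ]
      · intro θ hθ; rw [hA] at *; simp [smul_add, ha, hθ]
      · simp
      · simp
      · intro θ _
        simp only [fourier_apply, smul_add, AddCircle.toCircle_add, Circle.coe_mul]
    have hz : ∑ θ ∈ A, fourier m θ = 0 := by
      have : (fourier m a - 1) * ∑ θ ∈ A, fourier m θ = 0 := by
        rw [sub_mul, one_mul, ← hshift, sub_self]
      exact (mul_eq_zero.1 this).resolve_left (sub_ne_zero.2 hma)
    rw [hz, norm_zero]
    exact abs_nonneg _

/-- For `1 < k < n`, the strictly preperiodic angles `θ` with `(-2)^(n-1) θ = (-2)^(k-1) θ` form a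
finite set with at least `2^(n-3)` elements, whose exponential sums are bounded uniformly in `n`
and `k`: the set is a difference of two torsion subgroups of the circle. -/
theorem exists_finset_preperiodic_angles {n k : ℕ} (hk : 1 < k) (hkn : k < n) :
    ∃ S : Finset UnitAddCircle,
      (S : Set UnitAddCircle) = {θ : UnitAddCircle |
        ((-2 : ℤ) ^ (n - 1)) • θ = ((-2 : ℤ) ^ (k - 1)) • θ ∧ ((-2 : ℤ) ^ (n - k)) • θ ≠ θ} ∧
      2 ^ (n - 3) ≤ S.card ∧
      ∀ m : ℤ, m ≠ 0 → ‖∑ θ ∈ S, fourier m θ‖ ≤ 2 * |(m : ℝ)| := by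
  classical
  obtain ⟨p, rfl⟩ : ∃ p, k = p + 2 := ⟨k - 2, by omega⟩
  obtain ⟨d, rfl⟩ : ∃ d, n = p + 2 + (d + 1) := ⟨n - (p + 2) - 1, by omega⟩
  have e₁ : p + 2 + (d + 1) - 1 = (p + 1) + (d + 1) := by omega
  have e₂ : p + 2 - 1 = p + 1 := by omega
  have e₃ : p + 2 + (d + 1) - (p + 2) = d + 1 := by omega
  have e₄ : p + 2 + (d + 1) - 3 = p + d := by omega
  rw [e₁, e₂, e₃, e₄]
  set M : ℤ := (-2) ^ (d + 1) - 1 with hMdef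
  have hMabs : 2 ^ d ≤ M.natAbs := by
    have h1 : ((-2 : ℤ) ^ (d + 1)).natAbs = 2 ^ (d + 1) := by simp [Int.natAbs_pow]
    have h2 : 2 ^ (d + 1) = 2 * 2 ^ d := by ring
    have h3 : 1 ≤ 2 ^ d := Nat.one_le_two_pow
    omega
  have hM : M ≠ 0 := by
    intro h0; simp [h0] at hMabs
  have hN : (-2) ^ (p + 1) * M ≠ 0 := mul_ne_zero (pow_ne_zero _ (by norm_num)) hM
  have finite_torsion {K : ℤ} (hK : K ≠ 0) : {θ : UnitAddCircle | K • θ = 0}.Finite :=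
    AddCircle.finite_torsion_of_isSMulRegular_int (𝕜 := ℝ) 1 K
      (.of_right_eq_zero_of_smul fun x hx => by simpa [hK] using hx)
  obtain ⟨A, hA⟩ := (finite_torsion hN).exists_finset
  obtain ⟨B, hB⟩ := (finite_torsion hM).exists_finset
  simp only [Set.mem_ofPred_eq] at hA hB
  have hBA : B ⊆ A := fun θ hθ => by
    rw [hA, mul_smul, (hB θ).1 hθ, smul_zero]
  refine ⟨A \ B, ?_, ?_, fun m hm => ?_⟩
  · ext θ
    simp only [Finset.coe_sdiff, Set.mem_sdiff, Finset.mem_coe, hA, hB, Set.mem_ofPred_eq, hMdef]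
    rw [mul_sub, mul_one, ← pow_add, sub_smul, sub_smul, sub_eq_zero, sub_eq_zero, one_smul]
  · rw [Finset.card_sdiff_of_subset hBA, card_eq_natAbs_of_mem_iff_zsmul_eq_zero hN hA,
      card_eq_natAbs_of_mem_iff_zsmul_eq_zero hM hB, Int.natAbs_mul]
    have h1 : ((-2 : ℤ) ^ (p + 1)).natAbs = 2 * 2 ^ p := by
      rw [Int.natAbs_pow, pow_succ']; rfl
    have h3 : 1 ≤ 2 ^ p := Nat.one_le_two_pow
    rw [h1, pow_add]
    refine Nat.le_sub_of_add_le ?_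
    nlinarith [Nat.mul_le_mul_left (2 ^ p) hMabs, Nat.mul_le_mul_right M.natAbs h3]
  · rw [Finset.sum_sdiff_eq_sub hBA]
    refine (norm_sub_le _ _).trans ?_
    linarith [norm_sum_fourier_le_of_mem_iff_zsmul_eq_zero hN hA hm,
      norm_sum_fourier_le_of_mem_iff_zsmul_eq_zero hM hB hm]

/-- For any sequence `1 < k(n) < n` (for `n ≥ 4`), the sets
`X n = {θ ∈ ℝ/ℤ : (−2)^(n−1)·θ = (−2)^(k(n)−1)·θ, (−2)^(n−k(n))·θ ≠ θ}` are nonempty and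
finite, and the uniform probability measures on them converge weakly to the Haar
probability measure on `ℝ/ℤ`. -/
theorem antiholomorphic_misiurewicz_angles_equidistribute
    (k : ℕ → ℕ) (hk : ∀ n, 4 ≤ n → 1 < k n ∧ k n < n)
    (X : ℕ → Set UnitAddCircle)
    (hX : ∀ n, X n = {θ : UnitAddCircle |
        ((-2 : ℤ) ^ (n - 1)) • θ = ((-2 : ℤ) ^ (k n - 1)) • θ ∧
          ((-2 : ℤ) ^ (n - k n)) • θ ≠ θ}) :
    (∀ n, 4 ≤ n → (X n).Finite ∧ (X n).Nonempty) ∧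
      WeakTendsto (fun n => uniformOn (X n)) (volume : Measure UnitAddCircle) := by
  choose! S hS hcard hsum using fun n (hn : 4 ≤ n) =>
    exists_finset_preperiodic_angles (hk n hn).1 (hk n hn).2
  have hSX : ∀ n, 4 ≤ n → X n = S n := fun n hn => by rw [hX, hS n hn]
  have hne : ∀ n, 4 ≤ n → (S n).Nonempty := fun n hn =>
    Finset.card_pos.1 (lt_of_lt_of_le (by positivity) (hcard n hn))
  refine ⟨fun n hn => ?_, weakTendsto_volume_of_tendsto_integral_fourier ?_ fun m hm => ?_⟩
  · rw [hSX n hn]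
    exact ⟨(S n).finite_toSet, hne n hn⟩
  · filter_upwards [eventually_ge_atTop 4] with n hn
    rw [hSX n hn]
    exact isProbabilityMeasure_uniformOn_coe_finset (hne n hn)
  · have hlim : Tendsto (fun n : ℕ => 2 * |(m : ℝ)| / 2 ^ (n - 3)) atTop (𝓝 0) :=
      ((tendsto_pow_atTop_atTop_of_one_lt one_lt_two).comp
        (tendsto_sub_atTop_nat 3)).const_div_atTop _
    refine squeeze_zero_norm' ?_ hlim
    filter_upwards [eventually_ge_atTop 4] with n hn
    have hc : (2 : ℝ) ^ (n - 3) ≤ (S n).card := by exact_mod_cast hcard n hn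
    rw [hSX n hn, integral_uniformOn_coe_finset, norm_smul, norm_inv, Real.norm_natCast,
      inv_mul_eq_div]
    exact div_le_div₀ (by positivity) (hsum n hn m hm) (by positivity) hc
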